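/- If ζ = q_0 q_1 ⋯ q_{m−1} is a root of unity, then Z_gr(E(Λ_q)) is a commutative K-algebra, it is finitely generated as a K-algebra, and its Krull dimension equals 2. -/

import Mathlib

open scoped BigOperators

noncomputable section

/-- Generators of the path algebra: trivial paths `e i`, arrows `a i : i → i+1`
and `abar i : i+1 → i`. -/
inductive Gen (m : ℕ) : Type
  | e : ZMod m → Gen m
  | a : ZMod m → Gen m
  | abar : ZMod m → Gen m

/-- The free associative algebra on the generators. -/
abbrev FA (K : Type) [Field K] (m : ℕ) : Type := FreeAlgebra K (Gen m)

def Ee (K : Type) [Field K] (m : ℕ) (i : ZMod m) : FA K m := FreeAlgebra.ι K (Gen.e i)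
def Aa (K : Type) [Field K] (m : ℕ) (i : ZMod m) : FA K m := FreeAlgebra.ι K (Gen.a i)
def Bb (K : Type) [Field K] (m : ℕ) (i : ZMod m) : FA K m := FreeAlgebra.ι K (Gen.abar i)

/-- The defining relations of the path algebra KQ. -/
inductive PathRel (K : Type) [Field K] (m : ℕ) [NeZero m] : FA K m → FA K m → Prop
  | orth : ∀ i j : ZMod m, i ≠ j → PathRel K m (Ee K m i * Ee K m j) 0
  | idem : ∀ i : ZMod m, PathRel K m (Ee K m i * Ee K m i) (Ee K m i)
  | total : PathRel K m (∑ i : ZMod m, Ee K m i) 1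
  | asrc : ∀ i : ZMod m, PathRel K m (Ee K m i * Aa K m i) (Aa K m i)
  | atgt : ∀ i : ZMod m, PathRel K m (Aa K m i * Ee K m (i + 1)) (Aa K m i)
  | bsrc : ∀ i : ZMod m, PathRel K m (Ee K m (i + 1) * Bb K m i) (Bb K m i)
  | btgt : ∀ i : ZMod m, PathRel K m (Bb K m i * Ee K m i) (Bb K m i)

/-- The path algebra KQ. -/
abbrev PathAlg (K : Type) [Field K] (m : ℕ) [NeZero m] : Type := RingQuot (PathRel K m)

def pe (K : Type) [Field K] (m : ℕ) [NeZero m] (i : ZMod m) : PathAlg K m :=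
  RingQuot.mkAlgHom K (PathRel K m) (Ee K m i)
def pa (K : Type) [Field K] (m : ℕ) [NeZero m] (i : ZMod m) : PathAlg K m :=
  RingQuot.mkAlgHom K (PathRel K m) (Aa K m i)
def pb (K : Type) [Field K] (m : ℕ) [NeZero m] (i : ZMod m) : PathAlg K m :=
  RingQuot.mkAlgHom K (PathRel K m) (Bb K m i)

/-- The relations defining the Koszul dual (Ext algebra) of `Λ_q`:
`q_i⁻¹ a_i ā_i + ā_{i-1} a_{i-1} = 0`. -/
inductive ExtRel (K : Type) [Field K] (m : ℕ) [NeZero m] (q : ZMod m → K) :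
    PathAlg K m → PathAlg K m → Prop
  | rel : ∀ i : ZMod m,
      ExtRel K m q ((q i)⁻¹ • (pa K m i * pb K m i) + pb K m (i - 1) * pa K m (i - 1)) 0

/-- The Ext algebra `E(Λ_q)`. -/
abbrev ExtAlg (K : Type) [Field K] (m : ℕ) [NeZero m] (q : ZMod m → K) : Type :=
  RingQuot (ExtRel K m q)

def xe (K : Type) [Field K] (m : ℕ) [NeZero m] (q : ZMod m → K) (i : ZMod m) :
    ExtAlg K m q := RingQuot.mkAlgHom K (ExtRel K m q) (pe K m i)
def xa (K : Type) [Field K] (m : ℕ) [NeZero m] (q : ZMod m → K) (i : ZMod m) :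
    ExtAlg K m q := RingQuot.mkAlgHom K (ExtRel K m q) (pa K m i)
def xb (K : Type) [Field K] (m : ℕ) [NeZero m] (q : ZMod m → K) (i : ZMod m) :
    ExtAlg K m q := RingQuot.mkAlgHom K (ExtRel K m q) (pb K m i)

/-- `γ_i^n`, the image of the path `a_i a_{i+1} ⋯ a_{i+n-1}` in `E(Λ_q)`. -/
def gam (K : Type) [Field K] (m : ℕ) [NeZero m] (q : ZMod m → K) (i : ZMod m) :
    ℕ → ExtAlg K m q
  | 0 => xe K m q i
  | n + 1 => xa K m q i * gam K m q (i + 1) n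

/-- `δ_i^n`, the image of the path `ā_{i+n-1} ⋯ ā_{i+1} ā_i` in `E(Λ_q)`. -/
def del (K : Type) [Field K] (m : ℕ) [NeZero m] (q : ZMod m → K) (i : ZMod m) :
    ℕ → ExtAlg K m q
  | 0 => xe K m q i
  | n + 1 => xb K m q (i + (n : ZMod m)) * del K m q i n

/-- Homogeneity of path-length degree `n` in `E(Λ_q)`: membership in the span of
the (images of) paths of length `n`, i.e. of the monomials `γ_i^s δ_j^t` with `s + t = n`. -/
def Homog (K : Type) [Field K] (m : ℕ) [NeZero m] (q : ZMod m → K) (n : ℕ)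
    (z : ExtAlg K m q) : Prop :=
  z ∈ Submodule.span K
    {x : ExtAlg K m q | ∃ (i j : ZMod m) (s t : ℕ), s + t = n ∧ x = gam K m q i s * del K m q j t}

/-- The graded centre of `E(Λ_q)`: the subalgebra generated by all homogeneous elements `z`
of degree `n` such that `z g = (-1)^{n n'} g z` for all homogeneous `g` of degree `n'`. -/
def ZGr (K : Type) [Field K] (m : ℕ) [NeZero m] (q : ZMod m → K) :
    Subalgebra K (ExtAlg K m q) :=
  Algebra.adjoin K
    {z : ExtAlg K m q | ∃ n : ℕ, Homog K m q n z ∧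
      ∀ (n' : ℕ) (g : ExtAlg K m q), Homog K m q n' g →
        z * g = ((-1 : K) ^ (n * n')) • (g * z)}

/-- The product `q_k q_{k+1} ⋯ q_{k+len-1}` (subscripts modulo `m`). -/
def qblock (K : Type) [Field K] (m : ℕ) [NeZero m] (q : ZMod m → K) (k len : ℕ) : K :=
  ∏ j ∈ Finset.range len, q ((k + j : ℕ) : ZMod m)

/-- The coefficient `∏_{k=1}^{i} (q_k ⋯ q_{k+len-1})⁻¹`. -/
def wcoef (K : Type) [Field K] (m : ℕ) [NeZero m] (q : ZMod m → K) (i len : ℕ) : K :=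
  ∏ k ∈ Finset.Icc 1 i, (qblock K m q k len)⁻¹

theorem krull_integral {R S : Type*} [CommRing R] [CommRing S] [Algebra R S] [Algebra.IsIntegral R S]
    (hinj : Function.Injective (algebraMap R S)) : ringKrullDim S = ringKrullDim R := by
  apply le_antisymm
  · refine Order.krullDim_le_of_strictMono (PrimeSpectrum.comap (algebraMap R S)) ?_
    intro I J h
    have h' : I.asIdeal < J.asIdeal := h
    obtain ⟨hle, x, hxJ, hxI⟩ := SetLike.lt_iff_le_and_exists.mp h'
    exact Ideal.comap_lt_comap_of_integral_mem_sdiff hle ⟨hxJ, hxI⟩ (Algebra.IsIntegral.isIntegral x)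
  · have : FaithfulSMul R S := (faithfulSMul_iff_algebraMap_injective R S).mpr hinj
    refine iSup_le fun l => ?_
    obtain ⟨Q, hQ⟩ := (Ideal.nonempty_primesOver (S := S) l.head.asIdeal)
    have := hQ.1
    have := hQ.2
    obtain ⟨L, hL, -⟩ := Ideal.exists_ltSeries_of_hasGoingUp (S := S) l Q
    rw [← hL]
    exact le_iSup (fun p : LTSeries (PrimeSpectrum S) => (p.length : WithBot ℕ∞)) L

section model
set_option linter.unusedSectionVars false
variable (K : Type) [Field K] (m : ℕ) [NeZero m] (q : ZMod m → K)

/-- underlying space of the model -/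
abbrev MV : Type := (ZMod m × ℕ × ℕ) →₀ K

/-- basis vector -/
def bv (i : ZMod m) (s t : ℕ) : MV K m := Finsupp.single (i, s, t) 1

/-- coefficient -/
def cf (i : ZMod m) (s : ℕ) : K := ∏ l ∈ Finset.range s, (-(q (i + 1 + (l : ZMod m)))⁻¹)

def opE (j : ZMod m) : Module.End K (MV K m) :=
  Finsupp.linearCombination K (fun p => if p.1 = j then bv K m p.1 p.2.1 p.2.2 else 0)
def opA (j : ZMod m) : Module.End K (MV K m) :=
  Finsupp.linearCombination K (fun p => if p.1 = j + 1 then bv K m j (p.2.1 + 1) p.2.2 else 0)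
def opB (j : ZMod m) : Module.End K (MV K m) :=
  Finsupp.linearCombination K
    (fun p => if p.1 = j then cf K m q j p.2.1 • bv K m (j + 1) p.2.1 (p.2.2 + 1) else 0)

theorem opE_bv (j i : ZMod m) (s t : ℕ) :
    opE K m j (bv K m i s t) = if i = j then bv K m i s t else 0 := by
  simp [opE, bv, Finsupp.linearCombination_single]
theorem opA_bv (j i : ZMod m) (s t : ℕ) :
    opA K m j (bv K m i s t) = if i = j + 1 then bv K m j (s + 1) t else 0 := by
  simp [opA, bv, Finsupp.linearCombination_single]
theorem opB_bv (j i : ZMod m) (s t : ℕ) :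
    opB K m q j (bv K m i s t) = if i = j then cf K m q j s • bv K m (j + 1) s (t + 1) else 0 := by
  simp [opB, bv, Finsupp.linearCombination_single]

variable {K m} in
theorem end_ext {M : Type*} [AddCommMonoid M] [Module K M] {f g : MV K m →ₗ[K] M}
    (h : ∀ i s t, f (bv K m i s t) = g (bv K m i s t)) : f = g := by
  apply Finsupp.lhom_ext'
  rintro ⟨i, s, t⟩
  apply LinearMap.ext_ring
  exact h i s t

def genMap : Gen m → Module.End K (MV K m)
  | Gen.e i => opE K m i
  | Gen.a i => opA K m i
  | Gen.abar i => opB K m q i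

def phi0 : FA K m →ₐ[K] Module.End K (MV K m) := FreeAlgebra.lift K (genMap K m q)

theorem phi0_E (i) : phi0 K m q (Ee K m i) = opE K m i := by simp [phi0, Ee, genMap]
theorem phi0_A (i) : phi0 K m q (Aa K m i) = opA K m i := by simp [phi0, Aa, genMap]
theorem phi0_B (i) : phi0 K m q (Bb K m i) = opB K m q i := by simp [phi0, Bb, genMap]

theorem phi0_rel ⦃x y : FA K m⦄ (h : PathRel K m x y) : phi0 K m q x = phi0 K m q y := by
  induction h <;> simp only [map_mul, map_sum, map_one, map_zero, phi0_E, phi0_A, phi0_B] <;>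
    apply end_ext <;> intro k s t
  case orth i j hij =>
    rw [Module.End.mul_apply, opE_bv]
    split_ifs with h
    · rw [opE_bv, if_neg]; · simp
      rintro rfl; exact hij h
    · simp
  case idem i =>
    rw [Module.End.mul_apply, opE_bv]
    split_ifs with h
    · rw [opE_bv, if_pos h]
    · simp
  case total => simp [LinearMap.sum_apply, opE_bv]
  case asrc i =>
    rw [Module.End.mul_apply, opA_bv]
    split_ifs with h
    · rw [opE_bv, if_pos rfl]
    · simp
  case atgt i =>
    rw [Module.End.mul_apply, opE_bv, opA_bv]
    split_ifs with h
    · rw [opA_bv, if_pos h]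
    · simp
  case bsrc i =>
    rw [Module.End.mul_apply, opB_bv]
    split_ifs with h
    · rw [map_smul, opE_bv, if_pos rfl]
    · simp
  case btgt i =>
    rw [Module.End.mul_apply, opE_bv, opB_bv]
    split_ifs with h
    · rw [opB_bv, if_pos h]
    · simp

def phi1 : PathAlg K m →ₐ[K] Module.End K (MV K m) :=
  RingQuot.liftAlgHom K ⟨phi0 K m q, phi0_rel K m q⟩

theorem phi1_E (i) : phi1 K m q (pe K m i) = opE K m i := by
  simp [phi1, pe, RingQuot.liftAlgHom_mkAlgHom_apply, phi0_E]
theorem phi1_A (i) : phi1 K m q (pa K m i) = opA K m i := by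
  simp [phi1, pa, RingQuot.liftAlgHom_mkAlgHom_apply, phi0_A]
theorem phi1_B (i) : phi1 K m q (pb K m i) = opB K m q i := by
  simp [phi1, pb, RingQuot.liftAlgHom_mkAlgHom_apply, phi0_B]

theorem phi1_rel ⦃x y : PathAlg K m⦄ (h : ExtRel K m q x y) :
    phi1 K m q x = phi1 K m q y := by
  obtain ⟨i⟩ := h
  simp only [map_add, map_smul, map_mul, map_zero, phi1_A, phi1_B]
  apply end_ext
  intro k s t
  simp only [LinearMap.add_apply, LinearMap.smul_apply, Module.End.mul_apply, opA_bv, opB_bv,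
    sub_add_cancel]
  split_ifs with h
  · subst h
    rw [map_smul, opA_bv, opB_bv, if_pos rfl, if_pos rfl, sub_add_cancel, smul_smul, ← add_smul]
    have : cf K m q (k - 1) (s + 1) = - ((q k)⁻¹ * cf K m q k s) := by
      unfold cf
      rw [Finset.prod_range_succ']
      simp only [sub_add_cancel, Nat.cast_zero, add_zero, Nat.cast_add, Nat.cast_one]
      have : ∀ l : ℕ, k + ((l : ZMod m) + 1) = k + 1 + l := fun l => by ring
      simp only [this]
      ring
    rw [this]; simp
  · simp

def phi : ExtAlg K m q →ₐ[K] Module.End K (MV K m) :=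
  RingQuot.liftAlgHom K ⟨phi1 K m q, phi1_rel K m q⟩

theorem phi_E (i) : phi K m q (xe K m q i) = opE K m i := by
  simp [phi, xe, RingQuot.liftAlgHom_mkAlgHom_apply, phi1_E]
theorem phi_A (i) : phi K m q (xa K m q i) = opA K m i := by
  simp [phi, xa, RingQuot.liftAlgHom_mkAlgHom_apply, phi1_A]
theorem phi_B (i) : phi K m q (xb K m q i) = opB K m q i := by
  simp [phi, xb, RingQuot.liftAlgHom_mkAlgHom_apply, phi1_B]

/-! relations in the algebra -/
theorem path_rel {x y : FA K m} (h : PathRel K m x y) :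
    RingQuot.mkAlgHom K (ExtRel K m q) (RingQuot.mkAlgHom K (PathRel K m) x) =
    RingQuot.mkAlgHom K (ExtRel K m q) (RingQuot.mkAlgHom K (PathRel K m) y) := by
  rw [RingQuot.mkAlgHom_rel K h]

theorem xe_orth (i j : ZMod m) (h : i ≠ j) : xe K m q i * xe K m q j = 0 := by
  simpa [xe, pe] using path_rel K m q (PathRel.orth i j h)
theorem xe_idem (i : ZMod m) : xe K m q i * xe K m q i = xe K m q i := by
  simpa [xe, pe] using path_rel K m q (PathRel.idem i)
theorem xe_total : ∑ i, xe K m q i = 1 := by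
  simpa [xe, pe] using path_rel K m q PathRel.total
theorem xa_src (i : ZMod m) : xe K m q i * xa K m q i = xa K m q i := by
  simpa [xe, pe, xa, pa] using path_rel K m q (PathRel.asrc i)
theorem xa_tgt (i : ZMod m) : xa K m q i * xe K m q (i + 1) = xa K m q i := by
  simpa [xe, pe, xa, pa] using path_rel K m q (PathRel.atgt i)
theorem xb_src (i : ZMod m) : xe K m q (i + 1) * xb K m q i = xb K m q i := by
  simpa [xe, pe, xb, pb] using path_rel K m q (PathRel.bsrc i)
theorem xb_tgt (i : ZMod m) : xb K m q i * xe K m q i = xb K m q i := by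
  simpa [xe, pe, xb, pb] using path_rel K m q (PathRel.btgt i)
theorem x_rel (i : ZMod m) : xb K m q i * xa K m q i =
    (-(q (i + 1))⁻¹) • (xa K m q (i + 1) * xb K m q (i + 1)) := by
  have := RingQuot.mkAlgHom_rel K (ExtRel.rel (q := q) (i + 1))
  rw [map_add, map_smul, map_mul, map_mul, map_zero, add_sub_cancel_right] at this
  exact (eq_neg_of_add_eq_zero_right this).trans (neg_smul _ _).symm

/-- generation -/
theorem gen_top (S : Subalgebra K (ExtAlg K m q)) (he : ∀ i, xe K m q i ∈ S)
    (ha : ∀ i, xa K m q i ∈ S) (hb : ∀ i, xb K m q i ∈ S) (z) : z ∈ S := by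
  obtain ⟨z, rfl⟩ := RingQuot.mkAlgHom_surjective K _ z
  obtain ⟨z, rfl⟩ := RingQuot.mkAlgHom_surjective K _ z
  induction z using FreeAlgebra.induction with
  | grade0 r => simp
  | grade1 x =>
    cases x with
    | e i => exact he i
    | a i => exact ha i
    | abar i => exact hb i
  | mul a b ha hb => simp only [map_mul]; exact mul_mem ha hb
  | add a b ha hb => simp only [map_add]; exact add_mem ha hb

/-- monomial -/
def mon (i : ZMod m) (s t : ℕ) : ExtAlg K m q :=
  gam K m q i s * del K m q (i + s - t) t

theorem gam_src (i : ZMod m) (s : ℕ) : xe K m q i * gam K m q i s = gam K m q i s := by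
  cases s with
  | zero => exact xe_idem K m q i
  | succ n => rw [gam, ← mul_assoc, xa_src]

theorem gam_src_ne (i j : ZMod m) (h : j ≠ i) (s : ℕ) : xe K m q j * gam K m q i s = 0 := by
  rw [← gam_src, ← mul_assoc, xe_orth _ _ _ _ _ h, zero_mul]

theorem del_src (i : ZMod m) (t : ℕ) : xe K m q (i + t) * del K m q i t = del K m q i t := by
  cases t with
  | zero => simpa [del] using xe_idem K m q i
  | succ n => rw [del, ← mul_assoc, Nat.cast_succ, ← add_assoc, xb_src]

theorem xb_gam (j : ZMod m) (s : ℕ) : xb K m q j * gam K m q j s =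
    cf K m q j s • (gam K m q (j + 1) s * xb K m q (j + s)) := by
  induction s generalizing j with
  | zero => simp [gam, cf, xb_tgt, xb_src]
  | succ n ih =>
    rw [gam, ← mul_assoc, x_rel, smul_mul_assoc, mul_assoc, ih, gam, mul_smul_comm, smul_smul,
      mul_assoc]
    have e : j + ((n + 1 : ℕ) : ZMod m) = j + 1 + n := by push_cast; ring
    rw [e]
    congr 1
    unfold cf
    rw [Finset.prod_range_succ']
    have : ∀ l : ℕ, j + 1 + ((l : ZMod m) + 1) = j + 1 + 1 + l := fun l => by ring
    simp only [Nat.cast_zero, add_zero, Nat.cast_add, Nat.cast_one, this]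
    ring

theorem xe_mon (j i : ZMod m) (s t : ℕ) : xe K m q j * mon K m q i s t =
    if i = j then mon K m q i s t else 0 := by
  unfold mon
  split_ifs with h
  · subst h; rw [← mul_assoc, gam_src]
  · rw [← mul_assoc, gam_src_ne _ _ _ _ _ (Ne.symm h), zero_mul]

theorem xa_mon (j i : ZMod m) (s t : ℕ) : xa K m q j * mon K m q i s t =
    if i = j + 1 then mon K m q j (s + 1) t else 0 := by
  unfold mon
  split_ifs with h
  · subst h; rw [← mul_assoc, gam]; congr 2; push_cast; ring
  · rw [← xa_tgt, mul_assoc, ← mul_assoc (xe K m q _), gam_src_ne _ _ _ _ _ (Ne.symm h)]; simp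

theorem xb_mon (j i : ZMod m) (s t : ℕ) : xb K m q j * mon K m q i s t =
    if i = j then cf K m q j s • mon K m q (j + 1) s (t + 1) else 0 := by
  unfold mon
  split_ifs with h
  · subst h
    rw [← mul_assoc, xb_gam, smul_mul_assoc, mul_assoc, del]
    have e : i + 1 + (s : ZMod m) - ((t + 1 : ℕ) : ZMod m) = i + s - t := by push_cast; ring
    rw [e]
    simp
  · rw [← xb_tgt, mul_assoc, ← mul_assoc (xe K m q _), gam_src_ne _ _ _ _ _ (Ne.symm h)]; simp

/-- the inverse map -/
def Psi : MV K m →ₗ[K] ExtAlg K m q :=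
  Finsupp.linearCombination K (fun p => mon K m q p.1 p.2.1 p.2.2)

theorem Psi_bv (i : ZMod m) (s t : ℕ) : Psi K m q (bv K m i s t) = mon K m q i s t := by
  simp [Psi, bv, Finsupp.linearCombination_single]

/-- `Psi` is equivariant -/
theorem Psi_equiv (z : ExtAlg K m q) (v : MV K m) :
    Psi K m q (phi K m q z v) = z * Psi K m q v := by
  let S : Subalgebra K (ExtAlg K m q) :=
    { carrier := {z | ∀ v, Psi K m q (phi K m q z v) = z * Psi K m q v}
      mul_mem' := by
        intro a b ha hb v
        rw [map_mul, Module.End.mul_apply, ha, hb, mul_assoc]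
      add_mem' := by
        intro a b ha hb v
        rw [map_add, LinearMap.add_apply, map_add, ha, hb, add_mul]
      algebraMap_mem' := by
        intro r v
        simp [Algebra.algebraMap_eq_smul_one] }
  have key : ∀ z : ExtAlg K m q, (∀ i s t, Psi K m q (phi K m q z (bv K m i s t)) =
      z * mon K m q i s t) → z ∈ S := by
    intro z h v
    have : (Psi K m q) ∘ₗ (phi K m q z) = (LinearMap.mulLeft K z) ∘ₗ (Psi K m q) := by
      apply end_ext
      intro i s t
      simp [h, Psi_bv]
    exact LinearMap.congr_fun this v
  refine gen_top K m q S ?_ ?_ ?_ z v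
  · intro j; apply key; intro i s t
    rw [phi_E, opE_bv, xe_mon, apply_ite (Psi K m q), Psi_bv, map_zero]
  · intro j; apply key; intro i s t
    rw [phi_A, opA_bv, xa_mon, apply_ite (Psi K m q), Psi_bv, map_zero]
  · intro j; apply key; intro i s t
    rw [phi_B, opB_bv, xb_mon, apply_ite (Psi K m q), map_smul, Psi_bv, map_zero]

/-- unit vector -/
def uv : MV K m := ∑ i : ZMod m, bv K m i 0 0

theorem Psi_uv : Psi K m q (uv K m) = 1 := by
  rw [uv, map_sum, ← xe_total K m q]
  refine Finset.sum_congr rfl fun i _ => ?_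
  rw [Psi_bv]
  simp [mon, gam, del, xe_idem]

def Phi : ExtAlg K m q →ₗ[K] MV K m := (LinearMap.applyₗ (uv K m)) ∘ₗ (phi K m q).toLinearMap

theorem Phi_apply (z) : Phi K m q z = phi K m q z (uv K m) := rfl

theorem Phi_mul (z w) : Phi K m q (z * w) = phi K m q z (Phi K m q w) := by
  simp [Phi_apply]

theorem Psi_Phi (z) : Psi K m q (Phi K m q z) = z := by
  rw [Phi_apply, Psi_equiv, Psi_uv, mul_one]

theorem Phi_inj : Function.Injective (Phi K m q) :=
  Function.LeftInverse.injective (Psi_Phi K m q)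

theorem phi_inj : Function.Injective (phi K m q) := by
  intro a b h
  apply Phi_inj
  rw [Phi_apply, Phi_apply, h]

theorem phi_gam (i j : ZMod m) (s s' t : ℕ) : phi K m q (gam K m q i s) (bv K m j s' t) =
    if j = i + s then bv K m i (s + s') t else 0 := by
  induction s generalizing i with
  | zero =>
    rw [gam, phi_E, opE_bv]
    simp only [Nat.cast_zero, add_zero, zero_add]
    split_ifs with h
    · rw [h]
    · rfl
  | succ n ih =>
    rw [gam, map_mul, Module.End.mul_apply, ih, phi_A]
    have e : i + ((n + 1 : ℕ) : ZMod m) = i + 1 + n := by push_cast; ring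
    rw [e]
    split_ifs with h
    · rw [opA_bv, if_pos rfl, add_right_comm]
    · simp

/-- coefficient for `del` -/
def cd (j : ZMod m) (s t : ℕ) : K := ∏ k ∈ Finset.range t, cf K m q (j + (k : ZMod m)) s

theorem phi_del (i j : ZMod m) (s t t' : ℕ) : phi K m q (del K m q i t) (bv K m j s t') =
    if j = i then cd K m q i s t • bv K m (i + t) s (t + t') else 0 := by
  induction t with
  | zero =>
    rw [del, phi_E, opE_bv]
    simp only [Nat.cast_zero, add_zero, zero_add, cd, Finset.range_zero, Finset.prod_empty,
      one_smul]
    split_ifs with h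
    · rw [h]
    · rfl
  | succ n ih =>
    rw [del, map_mul, Module.End.mul_apply, ih, phi_B]
    split_ifs with h
    · rw [map_smul, opB_bv, if_pos rfl, smul_smul, cd, cd, Finset.prod_range_succ,
        add_right_comm n t' 1]
      congr 2
      push_cast; ring
    · simp

theorem phi_mon (i j : ZMod m) (s t s' t' : ℕ) :
    phi K m q (mon K m q i s t) (bv K m j s' t') =
    if j = i + s - t then cd K m q (i + s - t) s' t • bv K m i (s + s') (t + t') else 0 := by
  rw [mon, map_mul, Module.End.mul_apply, phi_del]
  split_ifs with h
  · rw [map_smul, phi_gam, if_pos (by ring)]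
  · simp

theorem cf_zero (j) : cf K m q j 0 = 1 := by simp [cf]
theorem cd_zero (j t) : cd K m q j 0 t = 1 := by simp [cd, cf_zero]

theorem Phi_mon (i : ZMod m) (s t : ℕ) : Phi K m q (mon K m q i s t) = bv K m i s t := by
  rw [Phi_apply, uv, map_sum]
  simp [phi_mon, cd_zero]

theorem Phi_Psi (v) : Phi K m q (Psi K m q v) = v := by
  have : (Phi K m q) ∘ₗ (Psi K m q) = LinearMap.id := by
    apply end_ext; intro i s t
    simp [Psi_bv, Phi_mon]
  exact LinearMap.congr_fun this v

variable {K m q} in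
theorem cd_ne (hq : ∀ i, q i ≠ 0) (j s t) : cd K m q j s t ≠ 0 := by
  unfold cd cf
  simp [Finset.prod_ne_zero_iff, hq]

end model

open scoped IsMulCommutative in
theorem final_alg {K A : Type} [Field K] [Ring A] [Algebra K A] (Z : Subalgebra K A)
    (hc : ∀ a b : Z, a * b = b * a) (x y : A) (hx : x ∈ Z) (hy : y ∈ Z)
    (hli : ∀ a b : ℕ, ∃ l : A →ₗ[K] K, ∀ a' b' : ℕ,
      l (x ^ a' * y ^ b') = if a' = a ∧ b' = b then 1 else 0)
    (T : Set A) (hT : T.Finite)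
    (hspan : ∀ z, z ∈ Submodule.span K {w : A | ∃ a b : ℕ, ∃ t ∈ T, w = x ^ a * y ^ b * t}) :
    ∃ (R : Type) (_ : CommRing R) (_ : Algebra K R),
      Nonempty (R ≃ₐ[K] Z) ∧ Algebra.FiniteType K R ∧ ringKrullDim R = 2 := by
  have : IsMulCommutative Z := ⟨⟨hc⟩⟩
  refine ⟨Z, inferInstance, inferInstance, ⟨AlgEquiv.refl⟩, ?_⟩
  let P := MvPolynomial (Fin 2) K
  let f : P →ₐ[K] Z := MvPolynomial.aeval ![⟨x, hx⟩, ⟨y, hy⟩]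
  have hf : ∀ (d : Fin 2 →₀ ℕ) (r : K),
      ((f (MvPolynomial.monomial d r) : Z) : A) = r • (x ^ d 0 * y ^ d 1) := by
    intro d r
    refine (congrArg Subtype.val (MvPolynomial.aeval_monomial _ d r)).trans ?_
    rw [Finsupp.prod_fintype _ _ (fun i => pow_zero _), Fin.prod_univ_two]
    simp [Algebra.smul_def]
  have hinj : Function.Injective f := by
    rw [injective_iff_map_eq_zero]
    intro p hp
    ext d
    obtain ⟨l, hl⟩ := hli (d 0) (d 1)
    have h1 : l ∘ₗ Z.val.toLinearMap ∘ₗ f.toLinearMap = MvPolynomial.lcoeff K d := by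
      apply MvPolynomial.linearMap_ext
      intro e
      apply LinearMap.ext_ring
      simp only [LinearMap.comp_apply, AlgHom.toLinearMap_apply, Subalgebra.coe_val, hf, one_smul,
        hl, MvPolynomial.lcoeff_apply, MvPolynomial.coeff_monomial]
      have : (e 0 = d 0 ∧ e 1 = d 1) ↔ e = d := by
        constructor
        · rintro ⟨h0, h1⟩
          ext i; fin_cases i <;> assumption
        · rintro rfl; simp
      simp only [this]
    have h2 := LinearMap.congr_fun h1 p
    have h3 : MvPolynomial.coeff d p = l ((f p : Z) : A) := h2.symm
    rw [h3, hp]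
    simp
  letI : Algebra P Z := f.toRingHom.toAlgebra
  have : IsScalarTower K P Z := IsScalarTower.of_algebraMap_eq fun r => (f.commutes r).symm
  letI : Module P A := Module.compHom A ((Z.val.toRingHom).comp f.toRingHom)
  have hsm : ∀ (p : P) (a : A), p • a = ((f p : Z) : A) * a := fun p a => rfl
  have hfinA : Module.Finite P A := by
    refine ⟨⟨hT.toFinset, ?_⟩⟩
    rw [eq_top_iff]
    rintro z -
    refine Submodule.span_induction ?_ ?_ ?_ ?_ (hspan z)
    · rintro w ⟨a, b, t, ht, rfl⟩
      have : x ^ a * y ^ b * t =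
          (MvPolynomial.monomial (Finsupp.single 0 a + Finsupp.single 1 b) (1 : K) : P) • t := by
        rw [hsm, hf]; simp
      rw [this]
      exact Submodule.smul_mem _ _ (Submodule.subset_span (by simpa using ht))
    · exact zero_mem _
    · intro _ _ _ _ h1 h2; exact add_mem h1 h2
    · intro r w _ h
      have : r • w = (MvPolynomial.C r : P) • w := by
        rw [hsm, MvPolynomial.C_apply, hf]; simp
      rw [this]
      exact Submodule.smul_mem _ _ h
  have hfin : Module.Finite P Z := by
    let g : Z →ₗ[P] A :=
      { toFun := fun z => z
        map_add' := fun _ _ => rfl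
        map_smul' := fun _ _ => rfl }
    exact Module.Finite.of_injective g Subtype.val_injective
  have hint : Algebra.IsIntegral P Z := inferInstance
  refine ⟨?_, ?_⟩
  · have : Algebra.FiniteType P Z := inferInstance
    exact Algebra.FiniteType.trans (S := P) inferInstance inferInstance
  · rw [krull_integral (R := P) (S := Z) hinj, MvPolynomial.ringKrullDim_of_isNoetherianRing]
    simp

section centre
set_option linter.unusedSectionVars false
variable (K : Type) [Field K] (m : ℕ) [NeZero m] (q : ZMod m → K)

theorem Phi_gam_del (i j : ZMod m) (s t : ℕ) : Phi K m q (gam K m q i s * del K m q j t) =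
    if j + t = i + s then bv K m i s t else 0 := by
  rw [Phi_mul, Phi_apply, uv, map_sum]
  simp [phi_del, cd_zero, phi_gam]

theorem homog_supp {n : ℕ} {z : ExtAlg K m q} (hz : Homog K m q n z) (i : ZMod m) (s t : ℕ)
    (h : Phi K m q z (i, s, t) ≠ 0) : s + t = n := by
  by_contra hne
  apply h
  refine Submodule.span_induction ?_ ?_ ?_ ?_ hz
  · rintro _ ⟨i', j', s', t', rfl, rfl⟩
    rw [Phi_gam_del]
    split_ifs
    · rw [bv, Finsupp.single_apply, if_neg]
      rintro ⟨⟩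
      exact hne rfl
    · rfl
  · simp
  · intro _ _ _ _ h1 h2; simp [h1, h2]
  · intro _ _ _ h1; simp [h1]

theorem homog_mon (i : ZMod m) (s t : ℕ) : Homog K m q (s + t) (mon K m q i s t) :=
  Submodule.subset_span ⟨i, _, s, t, rfl, rfl⟩

theorem coef_right (z : ExtAlg K m q) (i j : ZMod m) (s t s' t' : ℕ) :
    Phi K m q (z * mon K m q j s' t') (i, s + s', t + t') =
      if j = i + s - t then cd K m q (i + s - t) s' t * Phi K m q z (i, s, t) else 0 := by
  have h : (Finsupp.lapply (i, s + s', t + t')) ∘ₗ (Phi K m q) ∘ₗ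
      (LinearMap.mulRight K (mon K m q j s' t')) ∘ₗ (Psi K m q) =
      (if j = i + s - t then cd K m q (i + s - t) s' t else 0) •
        (Finsupp.lapply (i, s, t) : MV K m →ₗ[K] K) := by
    apply end_ext
    intro k a b
    simp only [LinearMap.comp_apply, LinearMap.mulRight_apply, Psi_bv, Phi_mul, Phi_mon, phi_mon,
      LinearMap.smul_apply, Finsupp.lapply_apply]
    by_cases hk : k = i ∧ a = s ∧ b = t
    · obtain ⟨rfl, rfl, rfl⟩ := hk
      split_ifs <;> simp [bv]
    · have h1 : bv K m k a b (i, s, t) = 0 := by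
        rw [bv, Finsupp.single_apply, if_neg]; simpa using hk
      have h2 : bv K m k (a + s') (b + t') (i, s + s', t + t') = 0 := by
        rw [bv, Finsupp.single_apply, if_neg]; simpa using hk
      rw [h1]
      split_ifs <;> simp [h2]
  have := LinearMap.congr_fun h (Phi K m q z)
  simp only [LinearMap.comp_apply, LinearMap.mulRight_apply, Psi_Phi, LinearMap.smul_apply,
      Finsupp.lapply_apply] at this
  rw [this]
  split_ifs <;> simp

theorem coef_left (z : ExtAlg K m q) (i : ZMod m) (s t s' t' : ℕ) :
    Phi K m q (mon K m q i s t * z) (i, s + s', t + t') =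
      cd K m q (i + s - t) s' t * Phi K m q z (i + s - t, s', t') := by
  have h : (Finsupp.lapply (i, s + s', t + t')) ∘ₗ (phi K m q (mon K m q i s t)) =
      (cd K m q (i + s - t) s' t) •
        (Finsupp.lapply (i + s - t, s', t') : MV K m →ₗ[K] K) := by
    apply end_ext
    intro k a b
    simp only [LinearMap.comp_apply, phi_mon, LinearMap.smul_apply, Finsupp.lapply_apply]
    by_cases hk : k = i + s - t ∧ a = s' ∧ b = t'
    · obtain ⟨rfl, rfl, rfl⟩ := hk
      simp [bv]
    · have h1 : bv K m k a b (i + s - t, s', t') = 0 := by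
        rw [bv, Finsupp.single_apply, if_neg]; simpa using hk
      rw [h1]
      split_ifs with hk'
      · have h2 : bv K m i (s + a) (t + b) (i, s + s', t + t') = 0 := by
          rw [bv, Finsupp.single_apply, if_neg]
          intro h3
          simp only [Prod.mk.injEq, add_right_inj, true_and] at h3
          exact hk ⟨hk', h3⟩
        simp [h2]
      · simp
  rw [Phi_mul]
  exact LinearMap.congr_fun h (Phi K m q z)

variable {K m q} in
theorem odd_zero (hq : ∀ i, q i ≠ 0) (h2 : (2 : K) ≠ 0) {n : ℕ} (hn : Odd n)
    {z : ExtAlg K m q} (hz : Homog K m q n z)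
    (hc : ∀ (n' : ℕ) (g : ExtAlg K m q), Homog K m q n' g →
        z * g = ((-1 : K) ^ (n * n')) • (g * z)) : z = 0 := by
  apply Phi_inj
  rw [map_zero]
  ext ⟨i, s, t⟩
  by_contra hne
  rw [Finsupp.zero_apply] at hne
  have hst := homog_supp K m q hz i s t hne
  have h1 := hc _ _ (homog_mon K m q i 0 0)
  have h1' := congrArg (fun w => Phi K m q w (i, s, t)) h1
  have e1 := coef_right K m q z i i s t 0 0
  have e2 := coef_left K m q z i 0 0 s t
  simp only [add_zero, zero_add, Nat.cast_zero, sub_zero, mul_zero, pow_zero, one_smul] at e1 e2 h1'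
  rw [e1, e2] at h1'
  have hi : i = i + s - t := by
    by_contra hi
    rw [if_neg hi] at h1'
    exact mul_ne_zero (cd_ne hq _ _ _) hne h1'.symm
  have h3 := hc _ _ (homog_mon K m q i s t)
  rw [hst, (hn.mul hn).neg_one_pow] at h3
  have h3' := congrArg (fun w => Phi K m q w (i, s + s, t + t)) h3
  simp only [map_smul, Finsupp.smul_apply, coef_left, coef_right, ← hi, if_true, smul_eq_mul] at h3'
  have h4 : 2 * (cd K m q i s t * Phi K m q z (i, s, t)) = 0 := by linear_combination h3'
  simp [h2, hne, cd_ne hq] at h4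

theorem zgr_comm (hq : ∀ i, q i ≠ 0) (a b : ↥(ZGr K m q)) : a * b = b * a := by
  have := Algebra.isMulCommutative_adjoin K
    (s := {z : ExtAlg K m q | ∃ n : ℕ, Homog K m q n z ∧
      ∀ (n' : ℕ) (g : ExtAlg K m q), Homog K m q n' g →
        z * g = ((-1 : K) ^ (n * n')) • (g * z)}) (by
    rintro x ⟨n, hx, hxc⟩ y ⟨n', hy, hyc⟩
    rw [hxc n' y hy]
    rcases Nat.even_or_odd (n * n') with h | h
    · rw [h.neg_one_pow, one_smul]
    · by_cases h2 : (2 : K) = 0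
      · have : (-1 : K) = 1 := by linear_combination -h2
        rw [this, one_pow, one_smul]
      · rw [odd_zero hq h2 (Nat.odd_mul.mp h).1 hx hxc]; simp)
  exact this.is_comm.comm a b

theorem prod_cast (g : ZMod m → K) : ∏ l ∈ Finset.range m, g (l : ZMod m) = ∏ i, g i := by
  refine Finset.prod_nbij' (fun l => (l : ZMod m)) ZMod.val ?_ ?_ ?_ ?_ ?_
  · simp
  · intro a _; simpa using ZMod.val_lt a
  · intro a ha; exact ZMod.val_cast_of_lt (by simpa using ha)
  · intro a _; simp
  · intro a _; rfl

theorem prod_block (g : ZMod m → K) (j : ZMod m) (k : ℕ) :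
    ∏ l ∈ Finset.range (m * k), g (j + (l : ZMod m)) = (∏ i, g i) ^ k := by
  induction k with
  | zero => simp
  | succ k ih =>
    rw [Nat.mul_succ, Finset.prod_range_add, ih, pow_succ]
    congr 1
    have : ∀ x : ℕ, j + ((m * k + x : ℕ) : ZMod m) = j + x := by intro x; simp
    simp only [this]
    rw [prod_cast K m (fun i => g (j + i))]
    exact Fintype.prod_equiv (Equiv.addLeft j) _ _ (fun _ => rfl)

variable {K m q} in
theorem block_one {n : ℕ} (h : (∏ i : ZMod m, q i) ^ n = 1) (j : ZMod m) :
    ∏ l ∈ Finset.range (m * (2 * n)), (-(q (j + (l : ZMod m)))⁻¹) = 1 := by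
  rw [prod_block K m (fun i => -(q i)⁻¹) j]
  have : ∏ i : ZMod m, (-(q i)⁻¹) = (-1) ^ (Fintype.card (ZMod m)) * (∏ i : ZMod m, q i)⁻¹ := by
    rw [Finset.prod_neg, Finset.prod_inv_distrib]; rfl
  rw [this, mul_pow, inv_pow, mul_comm 2 n, pow_mul (∏ i : ZMod m, q i), h, ← pow_mul]
  rw [Even.neg_one_pow]
  · simp
  · exact ⟨Fintype.card (ZMod m) * n, by ring⟩

variable {K m q} in
theorem cf_add {n : ℕ} (h : (∏ i : ZMod m, q i) ^ n = 1) (j : ZMod m) (s : ℕ) :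
    cf K m q j (s + m * (2 * n)) = cf K m q j s := by
  unfold cf
  rw [Finset.prod_range_add]
  simp only [Nat.cast_add, ← add_assoc]
  simp [block_one h]

variable {K m q} in
theorem cd_one {n : ℕ} (h : (∏ i : ZMod m, q i) ^ n = 1) (j : ZMod m) (s : ℕ) :
    cd K m q j s (m * (2 * n)) = 1 := by
  unfold cd cf
  rw [Finset.prod_comm]
  refine Finset.prod_eq_one fun l _ => ?_
  have : ∀ k : ℕ, j + (k : ZMod m) + 1 + l = j + 1 + l + k := fun k => by ring
  simp only [this]
  exact block_one h _

/-- the two central elements -/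
def cX (N : ℕ) : ExtAlg K m q := ∑ i : ZMod m, gam K m q i N * del K m q i 0
def cY (N : ℕ) : ExtAlg K m q := ∑ i : ZMod m, gam K m q i 0 * del K m q i N

theorem homog_cX (N : ℕ) : Homog K m q N (cX K m q N) :=
  Submodule.sum_mem _ fun i _ => Submodule.subset_span ⟨i, i, N, 0, by simp, rfl⟩
theorem homog_cY (N : ℕ) : Homog K m q N (cY K m q N) :=
  Submodule.sum_mem _ fun i _ => Submodule.subset_span ⟨i, i, 0, N, by simp, rfl⟩

theorem phi_cX (n : ℕ) (j : ZMod m) (s t : ℕ) :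
    phi K m q (cX K m q (m * n)) (bv K m j s t) = bv K m j (s + m * n) t := by
  simp only [cX, map_sum, LinearMap.sum_apply, map_mul, Module.End.mul_apply, phi_del]
  rw [Finset.sum_eq_single j]
  · simp [phi_gam, cd, add_comm]
  · intro b _ hb; rw [if_neg (Ne.symm hb), map_zero]
  · simp

variable {K m q} in
theorem phi_cY {n : ℕ} (h : (∏ i : ZMod m, q i) ^ n = 1) (j : ZMod m) (s t : ℕ) :
    phi K m q (cY K m q (m * (2 * n))) (bv K m j s t) = bv K m j s (t + m * (2 * n)) := by
  simp only [cY, map_sum, LinearMap.sum_apply, map_mul, Module.End.mul_apply, phi_del]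
  rw [Finset.sum_eq_single j]
  · simp [phi_gam, cd_one h, add_comm]
  · intro b _ hb; rw [if_neg (Ne.symm hb), map_zero]
  · simp

theorem central_of_shift (z : ExtAlg K m q) (A B : ℕ)
    (hz : ∀ j s t, phi K m q z (bv K m j s t) = bv K m j (s + A) (t + B))
    (hA : ∀ j s, cf K m q j (s + A) = cf K m q j s) (g : ExtAlg K m q) : z * g = g * z := by
  have key := gen_top K m q (Subalgebra.centralizer K {z}) ?_ ?_ ?_ g
  · exact (Subalgebra.mem_centralizer_iff K).mp key z rfl
  all_goals
    intro i
    rw [Subalgebra.mem_centralizer_iff]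
    rintro _ rfl
    apply phi_inj
    apply end_ext
    intro j s t
    rw [map_mul, map_mul, Module.End.mul_apply, Module.End.mul_apply, hz]
  · rw [phi_E, opE_bv, opE_bv]
    split_ifs
    · rw [hz]
    · simp
  · rw [phi_A, opA_bv, opA_bv]
    split_ifs
    · rw [hz, add_right_comm]
    · simp
  · rw [phi_B, opB_bv, opB_bv]
    split_ifs
    · rw [map_smul, hz, hA, add_right_comm]
    · simp

theorem mem_zgr (z : ExtAlg K m q) (n : ℕ) (hn : Even n) (hz : Homog K m q n z)
    (hc : ∀ g, z * g = g * z) : z ∈ ZGr K m q := by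
  apply Algebra.subset_adjoin
  refine ⟨n, hz, fun n' g _ => ?_⟩
  rw [(hn.mul_right n').neg_one_pow, one_smul, hc]

variable {K m q} in
theorem phi_pow {n : ℕ} (h : (∏ i : ZMod m, q i) ^ n = 1) (a b : ℕ) (j : ZMod m) (s t : ℕ) :
    phi K m q (cX K m q (m * (2 * n)) ^ a * cY K m q (m * (2 * n)) ^ b) (bv K m j s t) =
      bv K m j (s + m * (2 * n) * a) (t + m * (2 * n) * b) := by
  rw [map_mul, Module.End.mul_apply]
  have hY : phi K m q (cY K m q (m * (2 * n)) ^ b) (bv K m j s t) =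
      bv K m j s (t + m * (2 * n) * b) := by
    induction b with
    | zero => simp
    | succ b ih => rw [pow_succ', map_mul, Module.End.mul_apply, ih, phi_cY h, add_assoc]; rfl
  rw [hY]
  induction a with
  | zero => simp
  | succ b ih => rw [pow_succ', map_mul, Module.End.mul_apply, ih, phi_cX, add_assoc]; rfl

end centre

/-- if `ζ = q_0 ⋯ q_{m-1}` is a root of unity, then the graded centre
`Z_gr(E(Λ_q))` (≅ `HH^*(Λ_q)/N`) is a commutative `K`-algebra which is finitely
generated as a `K`-algebra and has Krull dimension 2: it is isomorphic as a `K`-algebra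
to a commutative finitely generated `K`-algebra of Krull dimension 2. -/
theorem graded_centre_comm_finite_type_krull_dim_two
    (K : Type) [Field K] (m : ℕ) [NeZero m] (hm : 1 ≤ m)
    (q : ZMod m → K) (hq : ∀ i, q i ≠ 0)
    (hζ : ∃ n : ℕ, 1 ≤ n ∧ (∏ i : ZMod m, q i) ^ n = 1) :
    (∀ a b : ↥(ZGr K m q), a * b = b * a) ∧
    ∃ (R : Type) (_ : CommRing R) (_ : Algebra K R),
      Nonempty (R ≃ₐ[K] ↥(ZGr K m q)) ∧ Algebra.FiniteType K R ∧ ringKrullDim R = 2 := by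
  refine ⟨zgr_comm K m q hq, ?_⟩
  obtain ⟨n, hn, h⟩ := hζ
  have hN : 0 < m * (2 * n) := by positivity
  have hev : Even (m * (2 * n)) := ⟨m * n, by ring⟩
  have hX := phi_cX K m q (2 * n)
  have hY := phi_cY (q := q) h
  have hpow := phi_pow (q := q) h
  have hXm : cX K m q (m * (2 * n)) ∈ ZGr K m q :=
    mem_zgr K m q _ _ hev (homog_cX K m q _)
      (central_of_shift K m q _ (m * (2 * n)) 0 hX (cf_add h))
  have hYm : cY K m q (m * (2 * n)) ∈ ZGr K m q :=
    mem_zgr K m q _ _ hev (homog_cY K m q _)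
      (central_of_shift K m q _ 0 (m * (2 * n)) hY (fun _ _ => rfl))
  generalize cX K m q (m * (2 * n)) = X at *
  generalize cY K m q (m * (2 * n)) = Y at *
  generalize m * (2 * n) = N at *
  refine final_alg (ZGr K m q) (zgr_comm K m q hq) X Y hXm hYm ?_
    (Set.range fun p : ZMod m × Fin N × Fin N => mon K m q p.1 p.2.1 p.2.2)
    (Set.finite_range _) ?_
  · intro a b
    refine ⟨(Finsupp.lapply ((0 : ZMod m), N * a, N * b)) ∘ₗ Phi K m q, fun a' b' => ?_⟩
    rw [LinearMap.comp_apply, Phi_apply, uv, map_sum]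
    simp only [hpow, zero_add, map_sum]
    simp only [Finsupp.lapply_apply, bv, Finsupp.single_apply, Prod.mk.injEq,
      mul_right_inj' hN.ne']
    rw [Finset.sum_eq_single 0]
    · simp
    · intro c _ hc; simp [hc]
    · simp
  · intro z
    rw [← Psi_Phi K m q z]
    generalize Phi K m q z = v
    rw [Psi, Finsupp.linearCombination_apply]
    refine Submodule.sum_mem _ fun p _ => Submodule.smul_mem _ _ (Submodule.subset_span ?_)
    obtain ⟨i, s, t⟩ := p
    refine ⟨s / N, t / N, _, ⟨(i, ⟨s % N, Nat.mod_lt _ hN⟩, ⟨t % N, Nat.mod_lt _ hN⟩), rfl⟩, ?_⟩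
    apply Phi_inj
    simp only [Phi_mul, Phi_mon]
    rw [hpow, Nat.mod_add_div, Nat.mod_add_div]
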